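/- (Double-angle formula for sin_{6/5,3/2}, Theorem 4.3.) Define Θ(t) = (2t/(1+t))^{2/3}, Φ(t) = 8·√( t·(3t+1)^3·(1−t) ) / ( 16t + (3t+1)^3·(1−t) ), and Ψ(t) = 2t^{3/5}/(1+t^{6/5}). Then for every y ∈ (0,1) with 2·F_{6/5,3/2}(y) < π_{6/5,3/2}/2, setting c = (1 − y^{3/2})^{5/6}, one has F_{6/5,3/2}( (Θ∘Φ∘Ψ)(c) ) = 2·F_{6/5,3/2}(y). Equivalently, for x ∈ [0, π_{6/5,3/2}/4), sin_{6/5,3/2}(2x) = (Θ∘Φ∘Ψ)(cos_{6/5,3/2} x). -/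

import Mathlib

/-!
Substitute `t ^ (3/2) = 1 - v ^ 2`: with `G v = F ((1 - v ^ 2) ^ (2/3))` one has
`G' v = -(4/3) v ^ (-2/3) (1 - v ^ 2) ^ (-1/3)`, so that `(G' v) ^ 3` is a rational function of `v`
(`hasDerivAt_G`, `gDeriv_cube`). In this coordinate `Θ ∘ Φ ∘ Ψ` becomes the algebraic map
`V = (1 - r) / (1 + r)`, where `r ^ 2 = R = (3s+1)^3 (1-s) / (16 s)` and `s = 2v / (1 + v^2)`
(`theta_phi_eq`). The factorization `1 - R = (3s-1)^3 (1+s) / (16 s)` and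
`dR/ds = -(9 s^2 - 1)^2 / (16 s^2)` give the cubed identity
`(G' V · dV/dv) ^ 3 = (2 G' v) ^ 3`, an identity of rational functions; cubing is injective on `ℝ`,
so `G ∘ V - 2 G` has zero derivative.

This holds for `v` between `3 - 2√2` (where `s = 1/3`, `R = 1`, `V = 0`) and `1` (where `V = 1` and
`G = 0`), and the mean value theorem yields `G (V v) = 2 G v` there (`G_V_eq`). At the left
endpoint it reads `F 1 = 2 G (3 - 2√2)`, so by monotonicity of `F` the hypothesis `2 F y < F 1`
places the parameter `v` of `y` in this range.
-/

open MeasureTheory Real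

/-- `Θ(t) = (2t/(1+t))^{2/3}`. -/
noncomputable def Theta (t : ℝ) : ℝ := (2 * t / (1 + t)) ^ ((2:ℝ)/3)

/-- `Φ(t) = 8·√(t·(3t+1)^3·(1−t)) / (16t + (3t+1)^3·(1−t))`. -/
noncomputable def Phi (t : ℝ) : ℝ :=
  8 * Real.sqrt (t * (3 * t + 1) ^ (3:ℕ) * (1 - t)) /
    (16 * t + (3 * t + 1) ^ (3:ℕ) * (1 - t))

/-- `Ψ(t) = 2t^{3/5}/(1+t^{6/5})`. -/
noncomputable def Psi (t : ℝ) : ℝ := 2 * t ^ ((3:ℝ)/5) / (1 + t ^ ((6:ℝ)/5))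

/-- The integral `F_{6/5,3/2}(y)`. -/
noncomputable def F (y : ℝ) : ℝ := ∫ t in (0:ℝ)..y, (1 - t ^ ((3:ℝ)/2)) ^ (-(5:ℝ)/6)

/-- `F` in the coordinate `v` given by `y ^ (3/2) = 1 - v ^ 2`. -/
noncomputable def G (v : ℝ) : ℝ := F ((1 - v ^ 2) ^ ((2:ℝ)/3))

/-- The derivative of `G` on `(0, 1)`. -/
noncomputable def gDeriv (v : ℝ) : ℝ := -(4/3) * v ^ (-(2:ℝ)/3) * (1 - v ^ 2) ^ (-(1:ℝ)/3)

/-- `Ψ` in the coordinate `v = t ^ (3/5)`. -/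
noncomputable def sMap (v : ℝ) : ℝ := 2 * v / (1 + v ^ 2)

/-- The ratio of the two summands in the denominator of `Φ`. -/
noncomputable def RMap (s : ℝ) : ℝ := (3 * s + 1) ^ 3 * (1 - s) / (16 * s)

/-- The map `Θ ∘ Φ ∘ Ψ` in the coordinate `v`, on both source and target. -/
noncomputable def VMap (v : ℝ) : ℝ := (1 - √(RMap (sMap v))) / (1 + √(RMap (sMap v)))

/-! ### The integral `F` -/

lemma rpow_three_halves_le {t : ℝ} (h0 : 0 ≤ t) (h1 : t ≤ 1) : t ^ ((3:ℝ)/2) ≤ t := by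
  rcases h0.eq_or_lt with rfl | h
  · rw [Real.zero_rpow (by norm_num)]
  · simpa using Real.rpow_le_rpow_of_exponent_ge h h1 (show (1:ℝ) ≤ 3/2 by norm_num)

/-- The integrand is dominated by `(1 - t) ^ (-5/6)`. -/
lemma integrable_integrand :
    IntervalIntegrable (fun t : ℝ => (1 - t ^ ((3:ℝ)/2)) ^ (-(5:ℝ)/6)) volume 0 1 := by
  have h := (intervalIntegral.intervalIntegrable_rpow' (a := 0) (b := 1)
    (show (-1:ℝ) < -(5:ℝ)/6 by norm_num)).comp_sub_left 1
  simp only [sub_zero, sub_self] at h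
  refine h.symm.mono_fun ?_ ?_
  · exact (by fun_prop : Measurable fun t : ℝ => (1 - t ^ ((3:ℝ)/2)) ^ (-(5:ℝ)/6)).aestronglyMeasurable
  · -- the endpoint `t = 1` is excluded, being null
    have hne : ∀ᵐ t : ℝ ∂(volume.restrict (Set.uIoc 0 1)), t ≠ 1 :=
      ae_restrict_of_ae (Measure.ae_ne volume 1)
    filter_upwards [ae_restrict_mem measurableSet_uIoc, hne] with t ht htne
    rw [Set.uIoc_of_le zero_le_one] at ht
    have ht1 : t < 1 := lt_of_le_of_ne ht.2 htne
    have hle := rpow_three_halves_le ht.1.le ht.2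
    rw [Real.norm_of_nonneg (Real.rpow_nonneg (by linarith) _),
      Real.norm_of_nonneg (Real.rpow_nonneg (by linarith) _)]
    exact Real.rpow_le_rpow_of_nonpos (by linarith) (by linarith) (by norm_num)

lemma integrable_integrand_sub {a b : ℝ} (ha : a ∈ Set.Icc (0:ℝ) 1) (hb : b ∈ Set.Icc (0:ℝ) 1) :
    IntervalIntegrable (fun t : ℝ => (1 - t ^ ((3:ℝ)/2)) ^ (-(5:ℝ)/6)) volume a b := by
  refine integrable_integrand.mono_set ?_
  rw [Set.uIcc_of_le (zero_le_one' ℝ)]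
  exact Set.uIcc_subset_Icc ha hb

lemma continuousOn_F : ContinuousOn F (Set.Icc 0 1) := by
  have h := intervalIntegral.continuousOn_primitive_interval' integrable_integrand
    (Set.left_mem_uIcc)
  rwa [Set.uIcc_of_le zero_le_one] at h

lemma F_mono {a b : ℝ} (ha : 0 ≤ a) (hab : a ≤ b) (hb : b ≤ 1) : F a ≤ F b := by
  have h := intervalIntegral.integral_add_adjacent_intervals
    (integrable_integrand_sub (a := 0) (b := a) (by simp) ⟨ha, hab.trans hb⟩)
    (integrable_integrand_sub (a := a) (b := b) ⟨ha, hab.trans hb⟩ ⟨ha.trans hab, hb⟩)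
  have h2 : 0 ≤ ∫ t in a..b, (1 - t ^ ((3:ℝ)/2)) ^ (-(5:ℝ)/6) := by
    refine intervalIntegral.integral_nonneg hab fun t ht => Real.rpow_nonneg ?_ _
    have := rpow_three_halves_le (ha.trans ht.1) (ht.2.trans hb)
    linarith [ht.2]
  unfold F
  linarith

lemma hasDerivAt_F {y : ℝ} (h0 : 0 < y) (h1 : y < 1) :
    HasDerivAt F ((1 - y ^ ((3:ℝ)/2)) ^ (-(5:ℝ)/6)) y := by
  have hlt : y ^ ((3:ℝ)/2) < 1 := Real.rpow_lt_one h0.le h1 (by norm_num)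
  refine intervalIntegral.integral_hasDerivAt_right
    (integrable_integrand_sub (by simp) ⟨h0.le, h1.le⟩) ?_ ?_
  · exact (by fun_prop : Measurable fun t : ℝ =>
      (1 - t ^ ((3:ℝ)/2)) ^ (-(5:ℝ)/6)).stronglyMeasurable.stronglyMeasurableAtFilter
  · exact (continuousAt_const.sub (continuousAt_id.rpow_const (Or.inl h0.ne'))).rpow_const
      (Or.inl (sub_pos.2 hlt).ne')

/-! ### The coordinate `v` -/

lemma y_mem {v : ℝ} (hv : v ∈ Set.Icc (0:ℝ) 1) : (1 - v ^ 2) ^ ((2:ℝ)/3) ∈ Set.Icc (0:ℝ) 1 := by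
  have : v ^ 2 ≤ 1 := pow_le_one₀ hv.1 hv.2
  exact ⟨Real.rpow_nonneg (by linarith) _,
    Real.rpow_le_one (by linarith) (by nlinarith [sq_nonneg v]) (by norm_num)⟩

lemma continuousOn_G : ContinuousOn G (Set.Icc 0 1) := by
  refine continuousOn_F.comp ?_ fun v hv => y_mem hv
  refine Continuous.continuousOn ?_
  exact (by fun_prop : Continuous fun v : ℝ => 1 - v ^ 2).rpow_const fun _ => Or.inr (by norm_num)

lemma hasDerivAt_G {v : ℝ} (h0 : 0 < v) (h1 : v < 1) : HasDerivAt G (gDeriv v) v := by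
  have hp : 0 < 1 - v ^ 2 := by nlinarith
  have hy0 : 0 < (1 - v ^ 2) ^ ((2:ℝ)/3) := Real.rpow_pos_of_pos hp _
  have hy1 : (1 - v ^ 2) ^ ((2:ℝ)/3) < 1 :=
    Real.rpow_lt_one hp.le (by nlinarith) (by norm_num)
  have hd : HasDerivAt (fun x : ℝ => 1 - x ^ 2) (-(2 * v)) v := by
    simpa using (hasDerivAt_pow 2 v).const_sub 1
  have hd2 := hd.rpow_const (p := (2:ℝ)/3) (Or.inl hp.ne')
  have hd3 := (hasDerivAt_F hy0 hy1).comp v hd2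
  refine hd3.congr_deriv ?_
  rw [← Real.rpow_mul hp.le, show (2:ℝ)/3 * (3/2) = 1 by norm_num, Real.rpow_one,
    show 1 - (1 - v ^ 2) = v ^ 2 by ring, ← Real.rpow_natCast v 2, ← Real.rpow_mul h0.le,
    show ((2:ℕ):ℝ) * (-5/6) = -(2:ℝ)/3 - 1 by norm_num, Real.rpow_sub_one h0.ne', gDeriv,
    show (2:ℝ)/3 - 1 = -1/3 by norm_num, Real.rpow_natCast v 2]
  field_simp
  ring

lemma gDeriv_cube {v : ℝ} (h0 : 0 < v) (h1 : v < 1) :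
    gDeriv v ^ 3 = -(64/27) / (v ^ 2 * (1 - v ^ 2)) := by
  have hp : 0 < 1 - v ^ 2 := by nlinarith
  have e1 : (v ^ (-(2:ℝ)/3)) ^ 3 = (v ^ 2)⁻¹ := by
    rw [← Real.rpow_natCast, ← Real.rpow_mul h0.le,
      show -(2:ℝ)/3 * ((3:ℕ):ℝ) = -((2:ℕ):ℝ) by norm_num, Real.rpow_neg h0.le, Real.rpow_natCast]
  have e2 : ((1 - v ^ 2) ^ (-(1:ℝ)/3)) ^ 3 = (1 - v ^ 2)⁻¹ := by
    rw [← Real.rpow_natCast, ← Real.rpow_mul hp.le,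
      show -(1:ℝ)/3 * ((3:ℕ):ℝ) = -1 by norm_num, Real.rpow_neg_one]
  rw [gDeriv, mul_pow, mul_pow, e1, e2]
  field_simp
  norm_num

/-! ### The algebraic map `VMap` -/

lemma hasDerivAt_sMap (v : ℝ) : HasDerivAt sMap (2 * (1 - v ^ 2) / (1 + v ^ 2) ^ 2) v := by
  have h : (1:ℝ) + v ^ 2 ≠ 0 := by positivity
  have h1 : HasDerivAt (fun x : ℝ => 2 * x) 2 v := by simpa using (hasDerivAt_id v).const_mul 2
  have h2 : HasDerivAt (fun x : ℝ => 1 + x ^ 2) (2 * v) v := by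
    simpa using (hasDerivAt_pow 2 v).const_add 1
  refine (h1.div h2 h).congr_deriv ?_
  ring

lemma hasDerivAt_RMap {s : ℝ} (hs : 0 < s) :
    HasDerivAt RMap (-(9 * s ^ 2 - 1) ^ 2 / (16 * s ^ 2)) s := by
  have h1 : HasDerivAt (fun x : ℝ => 3 * x + 1) 3 s := by
    simpa using ((hasDerivAt_id s).const_mul 3).add_const 1
  have h2 : HasDerivAt (fun x : ℝ => 1 - x) (-1) s := by
    simpa using (hasDerivAt_id s).const_sub 1
  have h3 : HasDerivAt (fun x : ℝ => 16 * x) 16 s := by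
    simpa using (hasDerivAt_id s).const_mul 16
  refine (((h1.pow 3).mul h2).div h3 (by positivity)).congr_deriv ?_
  simp only [Pi.pow_apply, Pi.mul_apply]
  field_simp
  push_cast
  ring

lemma one_sub_RMap {s : ℝ} (hs : 0 < s) : 1 - RMap s = (3 * s - 1) ^ 3 * (1 + s) / (16 * s) := by
  unfold RMap
  field_simp
  ring

/-- The condition `v ^ 2 - 6 v + 1 < 0` says that `s = sMap v` exceeds `1/3`. -/
lemma sMap_bounds {v : ℝ} (h0 : 0 < v) (h1 : v < 1) (h : v ^ 2 - 6 * v + 1 < 0) :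
    1/3 < sMap v ∧ sMap v < 1 := by
  unfold sMap
  constructor
  · rw [div_lt_div_iff₀ (by norm_num) (by positivity)]; linarith
  · rw [div_lt_one (by positivity)]; nlinarith [mul_pos (sub_pos.2 h1) (sub_pos.2 h1)]

lemma RMap_bounds {s : ℝ} (h0 : 1/3 < s) (h1 : s < 1) : 0 < RMap s ∧ RMap s < 1 := by
  have hs : 0 < s := by linarith
  constructor
  · unfold RMap
    have : 0 < 1 - s := by linarith
    positivity
  · have h := one_sub_RMap hs
    have h3 : 0 < 3 * s - 1 := by linarith
    have : 0 < (3 * s - 1) ^ 3 * (1 + s) / (16 * s) := by positivity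
    linarith

/-- The derivative of `G ∘ VMap` is `2 G'`; both sides are compared after cubing. -/
lemma hasDerivAt_G_VMap {v : ℝ} (h0 : 0 < v) (h1 : v < 1) (h : v ^ 2 - 6 * v + 1 < 0) :
    HasDerivAt (fun x => G (VMap x)) (2 * gDeriv v) v := by
  obtain ⟨hs0, hs1⟩ := sMap_bounds h0 h1 h
  obtain ⟨hR0, hR1⟩ := RMap_bounds hs0 hs1
  have hspos : 0 < sMap v := by linarith
  have hsq : √(RMap (sMap v)) ^ 2 = RMap (sMap v) := Real.sq_sqrt hR0.le
  have hr0 : 0 < √(RMap (sMap v)) := Real.sqrt_pos.2 hR0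
  have hr1 : √(RMap (sMap v)) < 1 := by
    rw [Real.sqrt_lt' one_pos]; simpa using hR1
  have hdr := ((hasDerivAt_RMap hspos).comp v (hasDerivAt_sMap v)).sqrt hR0.ne'
  have hdV := (hdr.const_sub 1).div (hdr.const_add 1) (by simp only [Function.comp]; positivity)
  have hV0 : 0 < VMap v := div_pos (by linarith) (by linarith)
  have hV1 : VMap v < 1 := (div_lt_one (by linarith)).2 (by linarith)
  refine ((hasDerivAt_G hV0 hV1).comp v hdV).congr_deriv ?_
  apply (Odd.strictMono_pow (by decide : Odd 3)).injective
  simp only [Function.comp]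
  rw [mul_pow, mul_pow, gDeriv_cube hV0 hV1, gDeriv_cube h0 h1]
  have h1s : 1 - sMap v ^ 2 = (1 - v ^ 2) ^ 2 / (1 + v ^ 2) ^ 2 := by
    unfold sMap; field_simp; ring
  have hsv : sMap v = 2 * v / (1 + v ^ 2) := rfl
  have hRs : RMap (sMap v) = (3 * sMap v + 1) ^ 3 * (1 - sMap v) / (16 * sMap v) := rfl
  have h1R := one_sub_RMap hspos
  rw [VMap]
  set s := sMap v with hsdef
  set R := RMap s with hRdef
  set r := √R with hrdef
  have hv : 0 < 1 - v ^ 2 := by nlinarith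
  have hr1' : 0 < 1 - r := by linarith
  have h9 : 0 < 9 * s ^ 2 - 1 := by nlinarith
  have h1s' : 0 < 1 - s ^ 2 := by nlinarith
  have h1R' : 0 < 1 - R := by linarith
  -- the product `R (1 - R)` in terms of `s`
  have hRR : R * (1 - R) = (9 * s ^ 2 - 1) ^ 3 * (1 - s ^ 2) / (256 * s ^ 2) := by
    rw [h1R, hRs]; field_simp; ring
  -- the three steps of the substitution, `v ↦ s ↦ R ↦ V`
  have k1 : (2 * (1 - v ^ 2) / (1 + v ^ 2) ^ 2) ^ 3 =
      2 * (s ^ 2 * (1 - s ^ 2) ^ 2) / (v ^ 2 * (1 - v ^ 2)) := by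
    rw [h1s, hsv]; field_simp
  have k2 : (-(9 * s ^ 2 - 1) ^ 2 / (16 * s ^ 2)) ^ 3 =
      -16 * (R * (1 - R)) ^ 2 / (s ^ 2 * (1 - s ^ 2) ^ 2) := by
    rw [hRR]; field_simp; ring
  have k3 : ∀ d : ℝ, -(64/27) / (((1 - r) / (1 + r)) ^ 2 * (1 - ((1 - r) / (1 + r)) ^ 2)) *
      ((-(d / (2 * r)) * (1 + r) - (1 - r) * (d / (2 * r))) / (1 + r) ^ 2) ^ 3 =
      (64/27) * d ^ 3 / (4 * (R * (1 - R)) ^ 2) := by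
    intro d
    have e : 1 - ((1 - r) / (1 + r)) ^ 2 = 4 * r / (1 + r) ^ 2 := by field_simp; ring
    have e2 : 1 - R = (1 - r) * (1 + r) := by rw [← hsq]; ring
    rw [e, e2, ← hsq]
    field_simp
    ring
  rw [k3, mul_pow, k1, k2]
  field_simp
  ring

/-! ### The duplication identity -/

lemma range_bounds {v : ℝ} (hv : v ∈ Set.Icc (3 - 2 * √2) 1) :
    0 < v ∧ v ^ 2 - 6 * v + 1 ≤ 0 := by
  have h2 : √2 ^ 2 = 2 := Real.sq_sqrt (by norm_num)
  have hp : 0 ≤ √2 := Real.sqrt_nonneg 2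
  have h3 : √2 < 3/2 := by nlinarith
  obtain ⟨ha, hb⟩ := hv
  refine ⟨by linarith, ?_⟩
  nlinarith [mul_nonneg (sub_nonneg.2 ha) (show 0 ≤ 3 + 2 * √2 - v by linarith)]

lemma continuousOn_VMap : ContinuousOn VMap (Set.Icc (3 - 2 * √2) 1) := by
  intro v hv
  have hs : 0 < sMap v := by
    have := (range_bounds hv).1
    unfold sMap; positivity
  have hc : ContinuousAt (fun x => √(RMap (sMap x))) v :=
    (ContinuousAt.comp (f := sMap) (hasDerivAt_RMap hs).continuousAt
      (hasDerivAt_sMap v).continuousAt).sqrt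
  exact ((continuousAt_const.sub hc).div (continuousAt_const.add hc)
    (add_pos_of_pos_of_nonneg one_pos (Real.sqrt_nonneg _)).ne').continuousWithinAt

lemma VMap_mem {v : ℝ} (hv : v ∈ Set.Icc (3 - 2 * √2) 1) : VMap v ∈ Set.Icc (0:ℝ) 1 := by
  obtain ⟨h0, h6⟩ := range_bounds hv
  have hs : 0 < sMap v := by unfold sMap; positivity
  have hs3 : 0 ≤ 3 * sMap v - 1 := by
    have : 1/3 ≤ sMap v := by
      unfold sMap
      rw [div_le_div_iff₀ (by norm_num) (by positivity)]; linarith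
    linarith
  have hR : RMap (sMap v) ≤ 1 := by
    have h := one_sub_RMap hs
    have : 0 ≤ (3 * sMap v - 1) ^ 3 * (1 + sMap v) / (16 * sMap v) := by positivity
    linarith
  have hr : √(RMap (sMap v)) ≤ 1 := Real.sqrt_le_one.2 hR
  have hr0 : 0 ≤ √(RMap (sMap v)) := Real.sqrt_nonneg _
  exact ⟨div_nonneg (by linarith) (by linarith), (div_le_one (by linarith)).2 (by linarith)⟩

lemma G_one : G 1 = 0 := by
  simp [G, F]

lemma G_zero : G 0 = F 1 := by
  simp [G]

lemma VMap_one : VMap 1 = 1 := by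
  norm_num [VMap, RMap, sMap]

lemma VMap_left : VMap (3 - 2 * √2) = 0 := by
  have h2 : √2 ^ 2 = 2 := Real.sq_sqrt (by norm_num)
  have hs : sMap (3 - 2 * √2) = 1/3 := by
    unfold sMap
    rw [div_eq_div_iff (by positivity) (by norm_num)]
    nlinarith
  norm_num [VMap, hs, RMap]

/-- The double-angle formula in the coordinate `v`. -/
lemma G_V_eq {v : ℝ} (hv : v ∈ Set.Icc (3 - 2 * √2) 1) : G (VMap v) = 2 * G v := by
  rcases hv.2.eq_or_lt with rfl | hlt
  · rw [VMap_one, G_one, mul_zero]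
  have hsub : Set.Icc v 1 ⊆ Set.Icc (3 - 2 * √2) 1 := Set.Icc_subset_Icc_left hv.1
  have hv0 := (range_bounds hv).1
  have hc : ContinuousOn (fun x => G (VMap x) - 2 * G x) (Set.Icc v 1) := by
    refine ContinuousOn.sub ?_ ?_
    · exact continuousOn_G.comp (continuousOn_VMap.mono hsub) fun x hx => VMap_mem (hsub hx)
    · exact continuousOn_const.mul (continuousOn_G.mono (Set.Icc_subset_Icc_left hv0.le))
  obtain ⟨c, -, hc⟩ := exists_hasDerivAt_eq_slope (fun x => G (VMap x) - 2 * G x) (fun _ => 0) hlt hc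
    (by
      intro x hx
      have hx0 : 0 < x := hv0.trans hx.1
      have h6 : x ^ 2 - 6 * x + 1 < 0 := by
        have := (range_bounds hv).2
        nlinarith [hx.1, hx.2, mul_pos (sub_pos.2 hx.1) (sub_pos.2 hx.2)]
      exact ((hasDerivAt_G_VMap hx0 hx.2 h6).sub ((hasDerivAt_G hx0 hx.2).const_mul 2)).congr_deriv
        (sub_self _))
  rw [eq_comm, div_eq_zero_iff] at hc
  rcases hc with hc | hc
  · rw [VMap_one, G_one] at hc
    linarith
  · linarith

/-- `Θ (Φ s) ^ (3/2) = 1 - V ^ 2`. -/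
lemma theta_phi_eq {v : ℝ} (h0 : 0 < v) (h1 : v < 1) :
    Theta (Phi (sMap v)) = (1 - VMap v ^ 2) ^ ((2:ℝ)/3) := by
  have hs : 0 < sMap v := by unfold sMap; positivity
  have hs1 : sMap v < 1 := by
    unfold sMap
    rw [div_lt_one (by positivity)]; nlinarith [mul_pos (sub_pos.2 h1) (sub_pos.2 h1)]
  have hR : 0 ≤ RMap (sMap v) := by
    have : 0 < 1 - sMap v := by linarith
    unfold RMap; positivity
  have hB : (3 * sMap v + 1) ^ 3 * (1 - sMap v) = 16 * sMap v * RMap (sMap v) := by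
    unfold RMap; field_simp
  have hsq : √(RMap (sMap v)) ^ 2 = RMap (sMap v) := Real.sq_sqrt hR
  have hr : 0 ≤ √(RMap (sMap v)) := Real.sqrt_nonneg _
  have hphi : Phi (sMap v) = 2 * √(RMap (sMap v)) / (1 + √(RMap (sMap v)) ^ 2) := by
    unfold Phi
    rw [mul_assoc (sMap v), hB,
      show sMap v * (16 * sMap v * RMap (sMap v)) = (4 * sMap v) ^ 2 * RMap (sMap v) by ring,
      Real.sqrt_mul (sq_nonneg _), Real.sqrt_sq (by positivity), hsq]
    field_simp
    ring
  rw [Theta, hphi, VMap]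
  congr 1
  generalize √(RMap (sMap v)) = r at hr
  field_simp
  ring

/-- Double-angle formula for `sin_{6/5,3/2}` (Theorem 4.3): for every
`y ∈ (0,1)` with `2·F_{6/5,3/2}(y) < π_{6/5,3/2}/2`, setting
`c = (1 - y^{3/2})^{5/6}`, one has `F_{6/5,3/2}((Θ∘Φ∘Ψ)(c)) = 2·F_{6/5,3/2}(y)`.
Equivalently, `sin_{6/5,3/2}(2x) = (Θ∘Φ∘Ψ)(cos_{6/5,3/2} x)` for
`x ∈ [0, π_{6/5,3/2}/4)`. -/
theorem double_angle_sin_65_32 :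
    ∀ y : ℝ, 0 < y → y < 1 →
      2 * (∫ t in (0:ℝ)..y, (1 - t ^ ((3:ℝ)/2)) ^ (-(5:ℝ)/6))
        < ∫ t in (0:ℝ)..1, (1 - t ^ ((3:ℝ)/2)) ^ (-(5:ℝ)/6) →
      ∀ c : ℝ, c = (1 - y ^ ((3:ℝ)/2)) ^ ((5:ℝ)/6) →
      (∫ t in (0:ℝ)..((Theta ∘ Phi ∘ Psi) c), (1 - t ^ ((3:ℝ)/2)) ^ (-(5:ℝ)/6))
        = 2 * ∫ t in (0:ℝ)..y, (1 - t ^ ((3:ℝ)/2)) ^ (-(5:ℝ)/6) := by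
  intro y hy0 hy1 hlt c hc
  change 2 * F y < F 1 at hlt
  change F (Theta (Phi (Psi c))) = 2 * F y
  have hu1 : y ^ ((3:ℝ)/2) < 1 := Real.rpow_lt_one hy0.le hy1 (by norm_num)
  have hu0 : 0 < y ^ ((3:ℝ)/2) := Real.rpow_pos_of_pos hy0 _
  obtain ⟨v, hv0, hv⟩ : ∃ v : ℝ, 0 < v ∧ v ^ 2 = 1 - y ^ ((3:ℝ)/2) :=
    ⟨√(1 - y ^ ((3:ℝ)/2)), Real.sqrt_pos.2 (by linarith), Real.sq_sqrt (by linarith)⟩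
  have hv1 : v < 1 := by nlinarith
  have hyv : (1 - v ^ 2) ^ ((2:ℝ)/3) = y := by
    rw [hv, sub_sub_cancel, ← Real.rpow_mul hy0.le]
    norm_num
  have hG : G v = F y := by rw [G, hyv]
  have hpsi : Psi c = sMap v := by
    have e : c = v ^ ((5:ℝ)/3) := by
      rw [hc, ← hv, ← Real.rpow_natCast v 2, ← Real.rpow_mul hv0.le]
      norm_num
    have e1 : c ^ ((3:ℝ)/5) = v := by
      rw [e, ← Real.rpow_mul hv0.le]; norm_num
    have e2 : c ^ ((6:ℝ)/5) = v ^ 2 := by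
      rw [e, ← Real.rpow_mul hv0.le, ← Real.rpow_natCast v 2]; norm_num
    rw [Psi, e1, e2, sMap]
  -- if `v < 3 - 2√2`, monotonicity of `F` would give `F 1 = 2 G (3 - 2√2) ≤ 2 F y`
  have hmem : v ∈ Set.Icc (3 - 2 * √2) 1 := by
    refine ⟨?_, hv1.le⟩
    by_contra! hcon
    have h2 : √2 ^ 2 = 2 := Real.sq_sqrt (by norm_num)
    have hle : 3 - 2 * √2 ≤ 1 := by nlinarith [Real.sqrt_nonneg 2]
    have hm : 3 - 2 * √2 ∈ Set.Icc (3 - 2 * √2) 1 := ⟨le_rfl, hle⟩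
    have h := G_V_eq hm
    rw [VMap_left, G_zero] at h
    have hw : (3 - 2 * √2) ^ 2 ≤ 1 := pow_le_one₀ (range_bounds hm).1.le hle
    have hmono : G (3 - 2 * √2) ≤ F y := by
      refine F_mono (Real.rpow_nonneg (by linarith) _) ?_ hy1.le
      rw [← hyv]
      exact Real.rpow_le_rpow (by linarith) (by nlinarith) (by norm_num)
    linarith
  rw [hpsi, theta_phi_eq hv0 hv1, ← hG]
  exact G_V_eq hmem
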